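/- In F_2[x,y], the polynomial P(x,y) = x^{10} + x^9y + x^9 + x^8y^2 + x^8y + x^8 + x^6y^4 + x^6y^3 + x^6y^2 + x^6y + x^6 + x^5y^5 + x^5 + x^4y^6 + x^4y^4 + x^4y^3 + x^4y^2 + x^4 + x^3y^6 + x^3y^4 + x^3y^3 + x^3y + x^2y^8 + x^2y^6 + x^2y^4 + x^2y^2 + x^2 + xy^9 + xy^8 + xy^6 + xy^3 + xy + x + y^{10} + y^9 + y^8 + y^6 + y^5 + y^4 + y^2 + y + 1 divides g_{205}(x,y); consequently g_{205}(x,y) is reducible in F_2[x,y] (so t = 205, with i = 2 and ℓ = 51, is a counterexample to the conjecture that g_t is absolutely irreducible for all t not of the form 2^i+1 or 4^i−2^i+1). -/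

import Mathlib

open MvPolynomial

set_option maxHeartbeats 1000000

/-- The explicit degree-10 factor of `g_205` found with MAGMA. -/
noncomputable def counterexampleFactor : MvPolynomial (Fin 2) (ZMod 2) :=
  X 0 ^ 10 + X 0 ^ 9 * X 1 + X 0 ^ 9 + X 0 ^ 8 * X 1 ^ 2 + X 0 ^ 8 * X 1 + X 0 ^ 8 +
    X 0 ^ 6 * X 1 ^ 4 + X 0 ^ 6 * X 1 ^ 3 + X 0 ^ 6 * X 1 ^ 2 + X 0 ^ 6 * X 1 + X 0 ^ 6 +
    X 0 ^ 5 * X 1 ^ 5 + X 0 ^ 5 + X 0 ^ 4 * X 1 ^ 6 + X 0 ^ 4 * X 1 ^ 4 +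
    X 0 ^ 4 * X 1 ^ 3 + X 0 ^ 4 * X 1 ^ 2 + X 0 ^ 4 + X 0 ^ 3 * X 1 ^ 6 +
    X 0 ^ 3 * X 1 ^ 4 + X 0 ^ 3 * X 1 ^ 3 + X 0 ^ 3 * X 1 + X 0 ^ 2 * X 1 ^ 8 +
    X 0 ^ 2 * X 1 ^ 6 + X 0 ^ 2 * X 1 ^ 4 + X 0 ^ 2 * X 1 ^ 2 + X 0 ^ 2 +
    X 0 * X 1 ^ 9 + X 0 * X 1 ^ 8 + X 0 * X 1 ^ 6 + X 0 * X 1 ^ 3 + X 0 * X 1 + X 0 +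
    X 1 ^ 10 + X 1 ^ 9 + X 1 ^ 8 + X 1 ^ 6 + X 1 ^ 5 + X 1 ^ 4 + X 1 ^ 2 + X 1 + 1

namespace S19

/-- Polynomial in `X 0` from the bits of a natural number (with fuel). -/
noncomputable def bitsPoly (n : ℕ) : MvPolynomial (Fin 2) (ZMod 2) :=
  ∑ i ∈ Finset.range n, if n.testBit i then X 0 ^ i else 0

theorem bitsPoly_eq (n m : ℕ) (h : n < 2 ^ m) :
    bitsPoly n = ∑ i ∈ Finset.range m, if n.testBit i then X 0 ^ i else 0 := by
  have key : ∀ a b : ℕ, n < 2 ^ a → a ≤ b →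
      (∑ i ∈ Finset.range a, if n.testBit i then
        (X 0 ^ i : MvPolynomial (Fin 2) (ZMod 2)) else 0) =
      ∑ i ∈ Finset.range b, if n.testBit i then X 0 ^ i else 0 := by
    intro a b ha hab
    apply Finset.sum_subset
    · intro i hi
      simp only [Finset.mem_range] at *
      omega
    · intro i _ hi
      simp only [Finset.mem_range, not_lt] at hi
      rw [Nat.testBit_lt_two_pow (lt_of_lt_of_le ha (Nat.pow_le_pow_right (by norm_num) hi))]
      simp
  unfold bitsPoly
  rcases le_total n m with h1 | h1
  · exact key n m Nat.lt_two_pow_self h1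
  · exact (key m n h h1).symm

theorem two_zero (p : MvPolynomial (Fin 2) (ZMod 2)) : p + p = 0 := CharTwo.add_self_eq_zero p

theorem bitsPoly_xor (a b : ℕ) : bitsPoly (a ^^^ b) = bitsPoly a + bitsPoly b := by
  have ha : a < 2 ^ (a + b) :=
    lt_of_lt_of_le Nat.lt_two_pow_self (Nat.pow_le_pow_right (by norm_num) (by omega))
  have hb : b < 2 ^ (a + b) :=
    lt_of_lt_of_le Nat.lt_two_pow_self (Nat.pow_le_pow_right (by norm_num) (by omega))
  rw [bitsPoly_eq _ _ ha, bitsPoly_eq _ _ hb, bitsPoly_eq _ _ (Nat.xor_lt_two_pow ha hb),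
    ← Finset.sum_add_distrib]
  apply Finset.sum_congr rfl
  intro i _
  rw [Nat.testBit_xor]
  cases a.testBit i <;> cases b.testBit i <;> simp [two_zero]

theorem bitsPoly_shift (a k : ℕ) : bitsPoly (a <<< k) = X 0 ^ k * bitsPoly a := by
  have ha : a < 2 ^ a := Nat.lt_two_pow_self
  have hs : a <<< k < 2 ^ (k + a) := by
    rw [Nat.shiftLeft_eq, pow_add, mul_comm]
    exact Nat.mul_lt_mul_of_pos_left ha (by positivity)
  rw [bitsPoly_eq _ _ hs, bitsPoly_eq _ _ ha, Finset.sum_range_add, Finset.mul_sum]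
  have h0 : (∑ i ∈ Finset.range k, if (a <<< k).testBit i then
        (X 0 ^ i : MvPolynomial (Fin 2) (ZMod 2)) else 0) = 0 := by
    apply Finset.sum_eq_zero
    intro i hi
    have := Finset.mem_range.1 hi
    simp [Nat.testBit_shiftLeft, this]
  rw [h0, zero_add]
  apply Finset.sum_congr rfl
  intro i _
  simp [Nat.testBit_shiftLeft, pow_add]

/-- Interpretation of a list of coefficients. -/
noncomputable def interp : List ℕ → MvPolynomial (Fin 2) (ZMod 2)
  | [] => 0
  | a :: l => bitsPoly a + X 1 * interp l

def addL : List ℕ → List ℕ → List ℕ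
  | [], m => m
  | a :: l, [] => a :: l
  | a :: l, b :: m => (a ^^^ b) :: addL l m

theorem interp_addL (l m : List ℕ) : interp (addL l m) = interp l + interp m := by
  induction l generalizing m with
  | nil => simp [addL, interp]
  | cons a l ih =>
    cases m with
    | nil => simp [addL, interp]
    | cons b m => simp only [addL, interp, ih, bitsPoly_xor]; ring

def shX (k : ℕ) : List ℕ → List ℕ
  | [] => []
  | a :: l => (a <<< k) :: shX k l

theorem interp_shX (k : ℕ) (l : List ℕ) : interp (shX k l) = X 0 ^ k * interp l := by
  induction l with
  | nil => simp [shX, interp]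
  | cons a l ih => simp only [shX, interp, ih, bitsPoly_shift]; ring

def shY : ℕ → List ℕ → List ℕ
  | 0, l => l
  | k + 1, l => 0 :: shY k l

theorem interp_shY (k : ℕ) (l : List ℕ) : interp (shY k l) = X 1 ^ k * interp l := by
  induction k with
  | zero => simp [shY]
  | succ k ih => simp only [shY, interp, ih]; simp [bitsPoly]; ring

/-- Interpretation of a sparse list of monomials. -/
noncomputable def sparse : List (ℕ × ℕ) → MvPolynomial (Fin 2) (ZMod 2)
  | [] => 0
  | p :: s => X 0 ^ p.1 * X 1 ^ p.2 + sparse s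

def mulS (l : List ℕ) : List (ℕ × ℕ) → List ℕ
  | [] => []
  | p :: s => addL (shX p.1 (shY p.2 l)) (mulS l s)

theorem interp_mulS (l : List ℕ) (s : List (ℕ × ℕ)) :
    interp (mulS l s) = sparse s * interp l := by
  induction s with
  | nil => simp [mulS, interp, sparse]
  | cons p s ih => simp only [mulS, interp_addL, interp_shX, interp_shY, ih, sparse]; ring

def tri (k : ℕ) : List (ℕ × ℕ) := [(k, 0), (0, k), (0, 0)]

theorem sparse_tri (k : ℕ) : sparse (tri k) = X 0 ^ k + X 1 ^ k + 1 := by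
  simp [sparse, tri]; ring

theorem frob (k : ℕ) : (X 0 ^ 2 ^ k + X 1 ^ 2 ^ k + 1 : MvPolynomial (Fin 2) (ZMod 2)) =
    (X 0 + X 1 + 1) ^ 2 ^ k := by
  rw [add_pow_char_pow, add_pow_char_pow, one_pow]

def pL : List (ℕ × ℕ) :=
  [(10, 0), (9, 1), (9, 0), (8, 2), (8, 1), (8, 0), (6, 4), (6, 3), (6, 2), (6, 1), (6, 0), (5, 5), (5, 0), (4, 6), (4, 4), (4, 3), (4, 2), 
  (4, 0), (3, 6), (3, 4), (3, 3), (3, 1), (2, 8), (2, 6), (2, 4), (2, 2), (2, 0), (1, 9), (1, 8), (1, 6), (1, 3), (1, 1), (1, 0), (0, 10), (0, 9), (0, 8), (0, 6), (0, 5), (0, 4), (0, 2), (0, 1), (0, 0)]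

def qL : List ℕ := [
  0x100136c80136c801001037d81037d810010026d90026d9001,
  0x114505051440136db4e0b3cd072db6c80228a0a0a28800,
  0x1320000013201144132011440264114402640000026400,
  0x1101011000000220202200001101011000000220202200,
  0x1061850430c001000060851420c000100061841430c100,
  0x104000001040030c1040030c0020830c00208000002080,
  0x1021011001201005003001040060050040240044042040,
  0x1000001000001300001300000320000320000020000020,
  0x100c800003601101000c800002600101100d8000026010,
  0x1005001400000200a0028000014005004000002800a008,
  0x1000001000000100000100000040000040000004000004,
  0x1001000000000300200100000020010030000000002002,
  0x1001801401201001101081041021011001009005003001,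
  0x36d85173cc0006db6db33cf3ccdb6db600033ce8a1b6c, 0x144050514400044144111451444114110001145050114,
  0x321011002201120220200000001011012201100220213, 0x100041450400100000005145140000001000414504001,
  0x60850430c0000c10c1030c30c083083000030c20a106, 0x41011001401105005001041040050050440140044041,
  0x20010000200100000000000000000000200100002001, 0x1001000000001001000000000010010000000010010,
  0xd801402201100a00a0000000005005008804402801b, 0x4000401000100000000000000000000040004010001,
  0x1001000000000200200000000010010000000002002, 0x1401401101101101041041011011011005005000,
  0x800400200100000000000000000000008004002001, 0x51763600000051400036360001450000003637450,
  0x1110001101100233011220331002202200022200, 0x10010000100110011001100110011001000010010,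
  0x5140000000000a28000000000145000000000028a, 0x1031201101101004042021010040440440246040,
  0x10010000100102003001020030010200200002002, 0xee00000000000000ee00000000000000ee000,
  0x1004401101100200cc0660330040088088022008, 0x400400100100400440140110010040040010010, 0x0,
  0x1001e011011010011010e101100101101100f001, 0x4004001001000800c0060030010008008002002, 0x0,
  0x332201101101133033000330332202202201133, 0x111000100100111011000110111001001000111, 0x0,
  0x51401101101104044041011010440440440145, 0x30200100100103003000030030200200200103, 0x0,
  0xee01101101100cc0cc0330330088088088077, 0x5400100100100440440110110040040040015, 0x0,
  0x1101101101101101011011011011011000, 0xe001001001000c00c0030030008008008007, 0x0, 0x0,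
  0x126db5a4b6d8036db6d8036da4b5b6c900, 0x1144000011440228914402288000022880,
  0x1321213200001145051440000264242640, 0x0, 0x30c0000030c0061830c00618000006180,
  0x104000001040020810400208000002080, 0x1200001200000360000360000024000024,
  0x1101100000000220330110000000022022, 0x1301a0168104114115105104102d00b019, 0x0,
  0x300300000000060050030000000006006, 0x100100000000020030010000000002002,
  0x6db6db36db6d8db6db636db6d9b6db6c, 0x4404401145144891891228a288022022,
  0x21221200000005055050000000242242, 0x0, 0xc00c0030c30c1831830618618006006,
  0x4004001041040810810208208002002, 0x0, 0x1101100000000330330000000022022,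
  0x1a01a0104104115115104104100b00b, 0x0, 0x300300000000050050000000006006,
  0x100100000000030030000000002002, 0x0, 0x67980033cc000cf300033cc0019e6,
  0x15737050761325552643705076754, 0x22011000220110002201100022011,
  0x1a28100504001145100041401028b, 0x61800030c0000c3000030c000186, 0x6003000060030000600300006003,
  0x2001000020010000200100002001, 0x1201dc1321321041099099077009, 0x880440220110000088044022011,
  0x400040100010000040004010001, 0x0, 0x1800c006003000001800c006003, 0x80040020010000008004002001,
  0x37077041321322642641077076, 0x11011000110112202200022022, 0x1001000010011001000010010, 0x0,
  0x3003000030030600600006006, 0x1001000010010200200002002, 0x1dc1dc1321321099099077077,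
  0x440440110110088088022022, 0x40040010010040040010010, 0x0, 0xc00c0030030018018006006,
  0x40040010010008008002002, 0x0, 0x32320001010002020001313, 0x1026c8100036d8001026c81,
  0x1145051440000228a0a288, 0x4040001010000404000101, 0x2021010000000000202101,
  0x10618514412490451430c1, 0xfa00000500000a000005f, 0x660330000000000066033,
  0x100110010000020022002, 0x140000050000014000005, 0xa005000000000000a005, 0x20030010000004006002,
  0x0, 0xc81c8136db6d9027026, 0x5055050000000a0aa0a, 0x0, 0x1011010000000202202,
  0x1851851249249143143, 0x0, 0x330330000000066066, 0x110110000000022022, 0x0, 0x5005000000000a00a,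
  0x30030000000006006, 0x0, 0xdb636db6db6d8db6, 0x5550000000000aaa, 0x0, 0x0, 0x1c712492492491c7,
  0x0, 0x0, 0x0, 0x0, 0x0, 0x0, 0x0, 0x0, 0x2289146289144, 0x2643705076132, 0x2201100022011,
  0x451045441144, 0x208104208104, 0x600300006003, 0x200100002001, 0xd80d8036036, 0x88044022011,
  0x40004010001, 0x0, 0x1800c006003, 0x8004002001, 0x2427637212, 0x0, 0x126db5b6c9, 0x0, 0x0, 0x0,
  0xb40ee05a, 0x0, 0x24036012, 0x0, 0x0, 0x0, 0x0, 0x2223111, 0xb4ba5a, 0x0, 0x606303, 0x202101,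
  0x0, 0xaa055, 0x66033, 0x0, 0x1e00f, 0xa005, 0x0, 0x0, 0x1fff, 0x0, 0x0, 0x0, 0x0, 0x0, 0x0, 0x0,
  0x0, 0x0, 0x0, 0x0, 0x1]

def lhsL : List ℕ :=
  mulS (mulS (mulS (mulS qL pL) [(1, 0), (0, 0)]) [(0, 1), (0, 0)]) [(1, 0), (0, 1)]

def rhsL : List ℕ :=
  addL (mulS [1] [(205, 0), (0, 205), (0, 0)])
    (mulS (mulS (mulS (mulS (mulS [1] (tri 1)) (tri 4)) (tri 8)) (tri 64)) (tri 128))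

theorem check : addL lhsL rhsL = List.replicate 206 0 := by
  decide +kernel

theorem interp_rep (n : ℕ) : interp (List.replicate n 0) = 0 := by
  induction n with
  | zero => simp [interp]
  | succ n ih => simp [List.replicate_succ, interp, ih, bitsPoly]

theorem interp_one : interp [1] = 1 := by
  simp [interp, bitsPoly]

theorem sparse_pL : sparse pL = counterexampleFactor := by
  simp only [sparse, pL, counterexampleFactor, pow_zero, pow_one, mul_one, one_mul]
  ring

theorem main_id :
    (X 0 + 1) * (X 1 + 1) * (X 0 + X 1) * (counterexampleFactor * interp qL) =
      X 0 ^ 205 + X 1 ^ 205 + 1 + (X 0 + X 1 + 1) ^ 205 := by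
  have h := congrArg interp check
  rw [interp_rep, interp_addL] at h
  have h2 : interp lhsL = interp rhsL := by
    rw [← sub_eq_zero, CharTwo.sub_eq_add]; exact h
  unfold lhsL rhsL at h2
  have e1 := frob 0
  have e4 := frob 2
  have e8 := frob 3
  have e64 := frob 6
  have e128 := frob 7
  norm_num only at e1 e4 e8 e64 e128
  simp only [interp_addL, interp_mulS, sparse_tri, interp_one, sparse_pL, e1, e4, e8, e64, e128]
    at h2
  simp only [sparse, pow_zero, pow_one, mul_one, one_mul, add_zero] at h2
  have e : (X 0 + X 1 + 1 : MvPolynomial (Fin 2) (ZMod 2)) ^ 205 =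
      (X 0 + X 1 + 1) ^ 128 * ((X 0 + X 1 + 1) ^ 64 * ((X 0 + X 1 + 1) ^ 8 *
        ((X 0 + X 1 + 1) ^ 4 * (X 0 + X 1 + 1)))) := by
    simp only [← pow_add, ← pow_succ]
  rw [e]
  generalize (X 0 + X 1 + 1 : MvPolynomial (Fin 2) (ZMod 2)) ^ 128 = a1 at *
  generalize (X 0 + X 1 + 1 : MvPolynomial (Fin 2) (ZMod 2)) ^ 64 = a2 at *
  generalize (X 0 + X 1 + 1 : MvPolynomial (Fin 2) (ZMod 2)) ^ 8 = a3 at *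
  generalize (X 0 + X 1 + 1 : MvPolynomial (Fin 2) (ZMod 2)) ^ 4 = a4 at *
  generalize counterexampleFactor = b1 at *
  generalize interp qL = b2 at *
  linear_combination h2

/-- Specialization `X 0 ↦ X`, `X 1 ↦ 0`. -/
noncomputable def sp : MvPolynomial (Fin 2) (ZMod 2) →ₐ[ZMod 2] Polynomial (ZMod 2) :=
  aeval ![Polynomial.X, 0]

theorem sp0 : sp (X 0) = Polynomial.X := by simp [sp]
theorem sp1 : sp (X 1) = 0 := by simp [sp]

theorem sp_P : sp counterexampleFactor = Polynomial.X ^ 10 + Polynomial.X ^ 9 +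
    Polynomial.X ^ 8 + Polynomial.X ^ 6 + Polynomial.X ^ 5 + Polynomial.X ^ 4 +
    Polynomial.X ^ 2 + Polynomial.X + 1 := by
  simp [counterexampleFactor, sp0, sp1]

theorem natDegree_P : (sp counterexampleFactor).natDegree = 10 := by
  rw [sp_P]; compute_degree!

theorem not_unit_P : ¬ IsUnit counterexampleFactor := by
  intro h
  have h1 := Polynomial.natDegree_eq_zero_of_isUnit (h.map sp)
  rw [natDegree_P] at h1
  omega

theorem not_unit_Q : ¬ IsUnit (interp qL) := by
  intro h
  have h1 := Polynomial.natDegree_eq_zero_of_isUnit (h.map sp)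
  have h2 := congrArg sp main_id
  simp only [map_add, map_mul, map_pow, map_one, sp0, sp1] at h2
  have h3 := congrArg (fun p => Polynomial.coeff p 204) h2
  rw [Polynomial.coeff_eq_zero_of_natDegree_lt] at h3
  · simp [Polynomial.coeff_X_add_one_pow, Polynomial.coeff_X_pow, Polynomial.coeff_one] at h3
    revert h3
    decide +kernel
  · have d1 : ((Polynomial.X + 1) * (0 + 1) * (Polynomial.X + 0) :
        Polynomial (ZMod 2)).natDegree ≤ 2 := by compute_degree!
    have d2 := natDegree_P
    refine lt_of_le_of_lt Polynomial.natDegree_mul_le ?_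
    have d3 := Polynomial.natDegree_mul_le (p := sp counterexampleFactor) (q := sp (interp qL))
    omega

theorem factor_ne : (X 0 + 1) * (X 1 + 1) * (X 0 + X 1) ≠
    (0 : MvPolynomial (Fin 2) (ZMod 2)) := by
  intro h
  have h1 := congrArg sp h
  simp only [map_add, map_mul, map_one, map_zero, sp0, sp1] at h1
  have h3 := congrArg (fun p => Polynomial.coeff p 2) h1
  simp [add_mul, ← sq, Polynomial.coeff_X] at h3

end S19

/-- The explicit degree-10 polynomial divides `g_205`, so `g_205` is reducible over
`𝔽₂`: `t = 205` (with `i = 2`, `ℓ = 51`) is a counterexample to the conjecture that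
`g_t` is absolutely irreducible for all `t` not of the form `2^i + 1` or `4^i - 2^i + 1`. -/
theorem stmt_19 (g : MvPolynomial (Fin 2) (ZMod 2))
    (hg : (X 0 + 1) * (X 1 + 1) * (X 0 + X 1) * g =
      X 0 ^ 205 + X 1 ^ 205 + 1 + (X 0 + X 1 + 1) ^ 205) :
    counterexampleFactor ∣ g ∧ ¬ Irreducible g := by
  have e : g = counterexampleFactor * S19.interp S19.qL :=
    mul_left_cancel₀ S19.factor_ne (hg.trans S19.main_id.symm)
  refine ⟨⟨_, e⟩, fun hi => ?_⟩
  rcases hi.isUnit_or_isUnit e with h | h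
  · exact S19.not_unit_P h
  · exact S19.not_unit_Q h
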